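/- Let n ≥ 6 be an integer and let G be a connected simple graph on n vertices such that the multiplicity of the largest distance Laplacian eigenvalue of G equals n−3. Then the complement of G is disconnected; equivalently, G is the join of two nonempty graphs. -/

import Mathlib

open Matrix

/-- The distance Laplacian matrix of a graph: diagonal entries are the transmissions
`Tr(v) = ∑ u, d(v,u)`, off-diagonal entries are `-d(u,v)`. -/
noncomputable def distLaplacian {V : Type*} [Fintype V] [DecidableEq V]
    (G : SimpleGraph V) : Matrix V V ℝ :=
  Matrix.of fun i j => if i = j then ∑ k : V, (G.dist i k : ℝ) else -(G.dist i j : ℝ)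

/-- The multiplicity of `μ` as an eigenvalue of `M`, i.e. the dimension of the
corresponding eigenspace. -/
noncomputable def eigMult {V : Type*} [Fintype V] (M : Matrix V V ℝ) (μ : ℝ) : ℕ :=
  Module.finrank ℝ (Module.End.eigenspace M.mulVecLin μ)

/-- The largest eigenvalue of a matrix. -/
noncomputable def lambdaMax {V : Type*} [Fintype V] (M : Matrix V V ℝ) : ℝ :=
  sSup {μ : ℝ | Module.End.HasEigenvalue M.mulVecLin μ}

/-- The transmission of a vertex. -/
noncomputable def transmission {V : Type*} [Fintype V] (G : SimpleGraph V) (v : V) : ℕ :=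
  ∑ u : V, G.dist v u


/-- A connected graph with connected complement contains an induced path on four vertices. -/
lemma exists_induced_P4 {n : ℕ} (hn : 2 ≤ n) (G : SimpleGraph (Fin n)) (hG : G.Connected)
    (hjoin : ¬ ∃ A B : Finset (Fin n), A.Nonempty ∧ B.Nonempty ∧ A ∪ B = Finset.univ ∧
        ∀ a ∈ A, ∀ b ∈ B, G.Adj a b) :
    ∃ v0 v1 v2 v3, G.Adj v0 v1 ∧ G.Adj v1 v2 ∧ G.Adj v2 v3 ∧ ¬ G.Adj v0 v2 ∧ ¬ G.Adj v1 v3 ∧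
      ¬ G.Adj v0 v3 ∧ v0 ≠ v2 ∧ v1 ≠ v3 ∧ v0 ≠ v3 := by
  classical
  let P : Finset (Fin n) → Prop := fun S => ∃ A B : Finset (Fin n), A.Nonempty ∧ B.Nonempty ∧
    A ∪ B = S ∧ ∀ a ∈ A, ∀ b ∈ B, G.Adj a b
  have hne : (Finset.univ.filter P).Nonempty := by
    have : Nontrivial (Fin n) := Fin.nontrivial_iff_two_le.mpr hn
    obtain ⟨w, hw⟩ := hG.preconnected.exists_adj_of_nontrivial (⟨0, by omega⟩ : Fin n)
    refine ⟨{⟨0, by omega⟩} ∪ {w}, ?_⟩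
    simp only [Finset.mem_filter, Finset.mem_univ, true_and]
    refine ⟨{⟨0, by omega⟩}, {w}, by simp, by simp, rfl, ?_⟩
    simpa using hw
  obtain ⟨S, hS, hmax⟩ := Finset.exists_max_image _ Finset.card hne
  simp only [Finset.mem_filter, Finset.mem_univ, true_and] at hS hmax
  have hmax' : ∀ w ∉ S, ¬ P (insert w S) := by
    intro w hw h
    have := hmax _ h
    rw [Finset.card_insert_of_notMem hw] at this
    omega
  have key : ∀ A B : Finset (Fin n), A.Nonempty → B.Nonempty → A ∪ B = S →
      (∀ a ∈ A, ∀ b ∈ B, G.Adj a b) → ∀ w ∉ S, ∃ d ∈ B, ¬ G.Adj w d := by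
    intro A B hA hB hAB hadj w hw
    by_contra! h
    apply hmax' w hw
    refine ⟨insert w A, B, by simp, hB, by rw [Finset.insert_union, hAB], ?_⟩
    intro a ha b hb
    rcases Finset.mem_insert.mp ha with rfl | ha
    · exact h b hb
    · exact hadj a ha b hb
  obtain ⟨A, B, hA, hB, hAB, hadj⟩ := hS
  have hSne : S ≠ Finset.univ := by
    intro h
    exact hjoin ⟨A, B, hA, hB, hAB.trans h, hadj⟩
  -- a vertex outside with a neighbour in S
  obtain ⟨w, hw, s, hs, hws⟩ : ∃ w, w ∉ S ∧ ∃ s, s ∈ S ∧ G.Adj w s := by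
    obtain ⟨u, hu⟩ : ∃ u, u ∉ S := by
      by_contra! h
      exact hSne (Finset.eq_univ_iff_forall.mpr h)
    obtain ⟨a, ha⟩ := hA
    have haS : a ∈ S := by rw [← hAB]; simp [ha]
    obtain ⟨p⟩ := hG.preconnected a u
    obtain ⟨d, hd, h1, h2⟩ := p.exists_boundary_dart (S : Set (Fin n)) (by simpa using haS)
      (by simpa using hu)
    exact ⟨d.snd, by simpa using h2, d.fst, by simpa using h1, d.adj.symm⟩
  obtain ⟨a, ha, b, hb, hwa, hwb, hab⟩ : ∃ a ∈ S, ∃ b ∈ S, G.Adj w a ∧ ¬ G.Adj w b ∧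
      ¬ G.Adj a b := by
    by_contra! h
    apply hmax' w hw
    refine ⟨S.filter (fun a => G.Adj w a), insert w (S.filter (fun a => ¬ G.Adj w a)),
      ⟨s, by simp [hs, hws]⟩, by simp, ?_, ?_⟩
    · ext x
      simp only [Finset.mem_union, Finset.mem_filter, Finset.mem_insert]
      tauto
    · intro a ha b hb
      simp only [Finset.mem_filter, Finset.mem_insert] at ha hb
      rcases hb with rfl | hb
      · exact ha.2.symm
      · exact h a ha.1 b hb.1 ha.2 hb.2
  have hwa' : w ≠ b := by rintro rfl; exact hw hb
  have hab' : a ≠ b := by rintro rfl; exact hwb hwa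
  have fin : ∀ A B : Finset (Fin n), A.Nonempty → B.Nonempty → A ∪ B = S →
      (∀ a ∈ A, ∀ b ∈ B, G.Adj a b) → a ∈ A → b ∈ A → ∃ v0 v1 v2 v3, G.Adj v0 v1 ∧ G.Adj v1 v2 ∧ G.Adj v2 v3 ∧ ¬ G.Adj v0 v2 ∧ ¬ G.Adj v1 v3 ∧
      ¬ G.Adj v0 v3 ∧ v0 ≠ v2 ∧ v1 ≠ v3 ∧ v0 ≠ v3 := by
    intro A B hA hB hAB hadj ha hb
    obtain ⟨d, hd, hwd⟩ := key A B hA hB hAB hadj w hw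
    refine ⟨w, a, d, b, hwa, hadj a ha d hd, (hadj b hb d hd).symm, hwd, hab, hwb, ?_, hab', hwa'⟩
    rintro rfl
    exact hw (by rw [← hAB]; simp [hd])
  have haU := ha
  have hbU := hb
  rw [← hAB, Finset.mem_union] at haU hbU
  rcases haU with ha1 | ha1 <;> rcases hbU with hb1 | hb1
  · exact fin A B hA hB hAB hadj ha1 hb1
  · exact absurd (hadj a ha1 b hb1) hab
  · exact absurd (hadj b hb1 a ha1).symm hab
  · exact fin B A hB hA (by rw [Finset.union_comm, hAB]) (fun x hx y hy => (hadj y hy x hx).symm)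
      ha1 hb1

lemma distLaplacian_isSymm {n : ℕ} (G : SimpleGraph (Fin n)) (i j : Fin n) :
    distLaplacian G i j = distLaplacian G j i := by
  unfold distLaplacian
  by_cases h : i = j
  · subst h; rfl
  · simp [h, Ne.symm h, G.dist_comm]

lemma distLaplacian_row {n : ℕ} (G : SimpleGraph (Fin n)) (i : Fin n) :
    ∑ j, distLaplacian G i j = 0 := by
  classical
  rw [← Finset.add_sum_erase _ _ (Finset.mem_univ i)]
  have h1 : ∑ x ∈ Finset.univ.erase i, distLaplacian G i x
      = ∑ x ∈ Finset.univ.erase i, -(G.dist i x : ℝ) := by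
    apply Finset.sum_congr rfl
    intro x hx
    simp [distLaplacian, (Finset.ne_of_mem_erase hx).symm]
  rw [h1]
  have h2 := Finset.add_sum_erase Finset.univ (fun k => (G.dist i k : ℝ)) (Finset.mem_univ i)
  simp only [SimpleGraph.dist_self, Nat.cast_zero, zero_add] at h2
  rw [Finset.sum_neg_distrib, h2]
  simp [distLaplacian]

lemma quad_le_lambdaMax {n : ℕ} (M : Matrix (Fin n) (Fin n) ℝ) (hM : ∀ i j, M i j = M j i)
    (x : Fin n → ℝ) : x ⬝ᵥ (M *ᵥ x) ≤ lambdaMax M * (x ⬝ᵥ x) := by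
  have hle : ∀ μ, Module.End.HasEigenvalue M.mulVecLin μ → μ ≤ lambdaMax M := by
    intro μ hμ
    apply le_csSup _ hμ
    exact (Module.End.finite_hasEigenvalue M.mulVecLin).bddAbove
  have hH : (lambdaMax M • (1 : Matrix (Fin n) (Fin n) ℝ) - M).IsHermitian := by
    ext i j
    simp [Matrix.one_apply, hM i j, eq_comm]
  have hps : (lambdaMax M • (1 : Matrix (Fin n) (Fin n) ℝ) - M).PosSemidef := by
    rw [hH.posSemidef_iff_eigenvalues_nonneg]
    intro i
    have h1 := hH.mulVec_eigenvectorBasis i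
    have h2 : Module.End.HasEigenvalue M.mulVecLin (lambdaMax M - hH.eigenvalues i) := by
      apply Module.End.hasEigenvalue_of_hasEigenvector (x := (hH.eigenvectorBasis i).ofLp)
      rw [Module.End.hasEigenvector_iff, Module.End.mem_eigenspace_iff]
      constructor
      · simp only [Matrix.mulVecLin_apply]
        rw [Matrix.sub_mulVec, Matrix.smul_mulVec, Matrix.one_mulVec] at h1
        rw [sub_smul, ← h1]
        abel
      · intro h0
        have := hH.eigenvectorBasis.orthonormal.ne_zero i
        apply this
        ext j
        exact congrFun h0 j
    have := hle _ h2
    simp only [Pi.zero_apply]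
    linarith
  have := hps.dotProduct_mulVec_nonneg x
  rw [Matrix.sub_mulVec, Matrix.smul_mulVec, Matrix.one_mulVec, dotProduct_sub,
    dotProduct_smul] at this
  simp only [star_trivial, smul_eq_mul] at this
  linarith

/-- `λI - L - J` is positive semidefinite once `λ ≥ n`. -/
lemma quad_strong {n : ℕ} (hn : 0 < n) (M : Matrix (Fin n) (Fin n) ℝ) (hM : ∀ i j, M i j = M j i)
    (hrow : ∀ i, ∑ j, M i j = 0) (hl : (n : ℝ) ≤ lambdaMax M)
    (x : Fin n → ℝ) : x ⬝ᵥ (M *ᵥ x) + (∑ i, x i) ^ 2 ≤ lambdaMax M * (x ⬝ᵥ x) := by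
  have hn' : (0 : ℝ) < n := by exact_mod_cast hn
  set s : ℝ := (∑ i, x i) / n with hs
  have hsum : ∑ i, x i = n * s := by rw [hs]; field_simp
  have h := quad_le_lambdaMax M hM (fun i => x i - s)
  have e1 : M *ᵥ (fun i => x i - s) = M *ᵥ x := by
    ext i
    simp only [Matrix.mulVec, dotProduct, mul_sub, Finset.sum_sub_distrib, ← Finset.sum_mul, hrow]
    ring
  have e2 : ∑ i, (M *ᵥ x) i = 0 := by
    simp only [Matrix.mulVec, dotProduct]
    rw [Finset.sum_comm]
    apply Finset.sum_eq_zero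
    intro j _
    rw [← Finset.sum_mul]
    have : ∑ i, M i j = 0 := by rw [← hrow j]; exact Finset.sum_congr rfl (fun i _ => hM i j)
    rw [this, zero_mul]
  have e3 : (fun i => x i - s) ⬝ᵥ (M *ᵥ x) = x ⬝ᵥ (M *ᵥ x) := by
    simp only [dotProduct, sub_mul, Finset.sum_sub_distrib, ← Finset.mul_sum]
    rw [e2]; ring
  have e4 : (fun i => x i - s) ⬝ᵥ (fun i => x i - s) = x ⬝ᵥ x - n * s ^ 2 := by
    have : ∀ i, (x i - s) * (x i - s) = x i * x i - 2 * s * x i + s ^ 2 := fun i => by ring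
    simp only [dotProduct, this, Finset.sum_add_distrib, Finset.sum_sub_distrib, ← Finset.mul_sum,
      hsum]
    simp
    ring
  rw [e1, e3, e4] at h
  rw [hsum]
  have : (n : ℝ) * (n * s ^ 2) ≤ lambdaMax M * (n * s ^ 2) :=
    mul_le_mul_of_nonneg_right hl (by positivity)
  nlinarith

lemma lambdaMax_ge {n : ℕ} (hn : 2 ≤ n) (G : SimpleGraph (Fin n)) (hG : G.Connected) :
    (n : ℝ) ≤ lambdaMax (distLaplacian G) := by
  classical
  have hn' : (2 : ℝ) ≤ n := by exact_mod_cast hn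
  set M := distLaplacian G with hMdef
  have hM := distLaplacian_isSymm G
  have hrow := distLaplacian_row G
  let v : Fin n := ⟨0, by omega⟩
  have h := quad_le_lambdaMax M hM (fun i => (if i = v then 1 else 0) - 1 / n)
  have e1 : M *ᵥ (fun i => (if i = v then 1 else 0) - 1 / (n : ℝ)) = fun i => M i v := by
    ext i
    simp only [Matrix.mulVec, dotProduct, mul_sub, Finset.sum_sub_distrib, ← Finset.sum_mul, hMdef, hrow]
    simp
  have e2 : ∑ i, M i v = 0 := by
    rw [← hrow v]; exact Finset.sum_congr rfl (fun i _ => hM i v)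
  have e3 : (fun i => (if i = v then 1 else 0) - 1 / (n : ℝ)) ⬝ᵥ (fun i => M i v) = M v v := by
    simp only [dotProduct, sub_mul, Finset.sum_sub_distrib, ← Finset.mul_sum, e2]
    simp
  have e4 : (fun i => (if i = v then 1 else 0) - 1 / (n : ℝ)) ⬝ᵥ
      (fun i => (if i = v then 1 else 0) - 1 / (n : ℝ)) = 1 - 1 / n := by
    have : ∀ i, ((if i = v then (1 : ℝ) else 0) - 1 / (n : ℝ)) * ((if i = v then 1 else 0) - 1 / (n : ℝ))
      = (if i = v then (1 - 2 / (n : ℝ)) else 0) + 1 / (n : ℝ) ^ 2 := by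
      intro i
      split_ifs
      · field_simp; ring
      · field_simp; ring
    simp only [dotProduct, this, Finset.sum_add_distrib]
    simp
    field_simp
    ring
  rw [e1, e3, e4] at h
  have htr : (n : ℝ) - 1 ≤ M v v := by
    have : M v v = ∑ k, (G.dist v k : ℝ) := by simp [hMdef, distLaplacian]
    rw [this, ← Finset.add_sum_erase _ _ (Finset.mem_univ v)]
    have h1 : ∑ k ∈ Finset.univ.erase v, (1 : ℝ) ≤ ∑ k ∈ Finset.univ.erase v, (G.dist v k : ℝ) := by
      apply Finset.sum_le_sum
      intro k hk
      have := hG.pos_dist_of_ne (Finset.ne_of_mem_erase hk).symm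
      exact_mod_cast this
    rw [Finset.sum_const, Finset.card_erase_of_mem (Finset.mem_univ _)] at h1
    simp only [Finset.card_univ, Fintype.card_fin, nsmul_eq_mul, mul_one] at h1
    rw [Nat.cast_sub (by omega)] at h1
    simp only [SimpleGraph.dist_self, Nat.cast_zero, zero_add, Nat.cast_one] at h1 ⊢
    exact h1
  have h5 : (n : ℝ) - 1 ≤ lambdaMax M * (1 - 1 / n) := htr.trans h
  have h6 : lambdaMax M * (1 - 1 / n) = lambdaMax M * (n - 1) / n := by field_simp
  rw [h6, le_div_iff₀ (by linarith)] at h5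
  have : 0 < (n : ℝ) - 1 := by linarith
  nlinarith

/-- four points carry a nonzero eigenvector -/
lemma exists_rel {n : ℕ} (M : Matrix (Fin n) (Fin n) ℝ) (l : ℝ) (hn : 6 ≤ n)
    (hmult : eigMult M l = n - 3) (p : Fin 4 → Fin n) (hp : Function.Injective p) :
    ∃ z : Fin 4 → ℝ, z ≠ 0 ∧ ∀ i, ∑ k, M i (p k) * z k = l * ∑ k, (if p k = i then z k else 0) := by
  classical
  let F : (Fin 4 → ℝ) →ₗ[ℝ] (Fin n → ℝ) :=
    { toFun := fun z i => ∑ k, (if p k = i then z k else 0)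
      map_add' := by
        intro x y; ext i; simp only [Pi.add_apply, ← Finset.sum_add_distrib]
        apply Finset.sum_congr rfl; intro k _; split_ifs <;> simp
      map_smul' := by
        intro c x; ext i; simp [Finset.mul_sum] }
  have hF : ∀ z k, F z (p k) = z k := by
    intro z k
    change ∑ k', (if p k' = p k then z k' else 0) = z k
    simp [hp.eq_iff]
  have hinj : Function.Injective F := by
    intro x y h; ext k; rw [← hF x k, h, hF]
  have h1 : Module.finrank ℝ (LinearMap.range F) = 4 := by
    rw [LinearMap.finrank_range_of_inj hinj]; simp
  have h2 := Submodule.finrank_sup_add_finrank_inf_eq (LinearMap.range F)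
    (Module.End.eigenspace M.mulVecLin l)
  unfold eigMult at hmult
  have h3 := Submodule.finrank_le (LinearMap.range F ⊔ Module.End.eigenspace M.mulVecLin l)
  rw [Module.finrank_fin_fun] at h3
  have h4 : 0 < Module.finrank ℝ
      (LinearMap.range F ⊓ Module.End.eigenspace M.mulVecLin l : Submodule ℝ (Fin n → ℝ)) := by
    omega
  obtain ⟨⟨y, hy⟩, hy0⟩ := Module.finrank_pos_iff_exists_ne_zero.mp h4
  obtain ⟨⟨z, rfl⟩, hz⟩ := Submodule.mem_inf.mp hy
  refine ⟨z, ?_, ?_⟩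
  · rintro rfl; apply hy0; ext1; simp
  · intro i
    rw [Module.End.mem_eigenspace_iff] at hz
    have := congrFun hz i
    simp only [Matrix.mulVecLin_apply, Pi.smul_apply, smul_eq_mul] at this
    change _ = l * F z i
    rw [← this]
    change _ = ∑ j, M i j * (∑ k, (if p k = j then z k else 0))
    simp only [Finset.mul_sum]
    rw [Finset.sum_comm]
    apply Finset.sum_congr rfl
    intro k _
    simp

lemma alg_psd (a b : ℝ) (h : ∀ s t : ℝ, 0 ≤ a * s ^ 2 + 2 * s * t + b * t ^ 2) :
    0 < a ∧ 0 < b ∧ 1 ≤ a * b := by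
  have ha0 : 0 ≤ a := by have := h 1 0; linarith
  have hb0 : 0 ≤ b := by have := h 0 1; linarith
  have ha : 0 < a := by
    rcases ha0.lt_or_eq with h1 | h1
    · exact h1
    · have := h (-(b + 1) / 2) 1
      rw [← h1] at this
      linarith
  have hb : 0 < b := by
    rcases hb0.lt_or_eq with h1 | h1
    · exact h1
    · have := h 1 (-(a + 1) / 2)
      rw [← h1] at this
      linarith
  refine ⟨ha, hb, ?_⟩
  have h1 := h b (-1)
  have h2 : 0 ≤ b * (a * b - 1) := by nlinarith
  have := nonneg_of_mul_nonneg_right h2 hb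
  linarith

/-- The affine dependence carried by an induced path on four vertices. -/
lemma alg_path (b0 b1 b2 b3 E z0 z1 z2 z3 : ℝ) (hE : 1 ≤ E)
    (p1 : 0 < b1) (p2 : 0 < b2) (h02 : 1 ≤ b0 * b2)
    (hz : ¬ (z0 = 0 ∧ z1 = 0 ∧ z2 = 0 ∧ z3 = 0))
    (hs : z0 + z1 + z2 + z3 = 0)
    (r0 : b0 * z0 + z2 + E * z3 = 0) (r1 : b1 * z1 + z3 = 0) (r2 : z0 + b2 * z2 = 0)
    (r3 : E * z0 + z1 + b3 * z3 = 0) :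
    ∃ r h1 h2 : ℝ, 0 < r ∧ 0 < h1 ∧ 0 < h2 ∧ b1 * h1 = 1 ∧ b2 * h2 = 1 ∧ b0 = h2 + E * r ∧
      b3 * r = r * h1 + E ∧ 1 + r * h1 = h2 + r ∧ z0 ≠ 0 ∧ z1 = r * h1 * z0 ∧ z2 = - h2 * z0 ∧
      z3 = - r * z0 := by
  have hz0 : z0 ≠ 0 := by
    intro h
    have hz2 : z2 = 0 := by
      have : b2 * z2 = 0 := by linarith
      rcases mul_eq_zero.mp this with h' | h'
      · linarith
      · exact h'
    have hz3 : z3 = 0 := by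
      have : E * z3 = 0 := by rw [h, hz2] at r0; linarith
      rcases mul_eq_zero.mp this with h' | h'
      · linarith
      · exact h'
    exact hz ⟨h, by linarith, hz2, hz3⟩
  have hz2 : z2 = -(1 / b2) * z0 := by field_simp; linarith
  have hz3 : z3 = -(-z3 / z0) * z0 := by field_simp
  have hz1 : z1 = (-z3 / z0) * (1 / b1) * z0 := by field_simp; linarith
  set r := -z3 / z0 with hr
  have hb0 : b0 = 1 / b2 + E * r := by
    have : (b0 - 1 / b2 - E * r) * z0 = 0 := by
      rw [hz2, hz3] at r0; linarith
    rcases mul_eq_zero.mp this with h' | h'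
    · linarith
    · exact absurd h' hz0
  have hb3 : b3 * r = r * (1 / b1) + E := by
    have : (b3 * r - r * (1 / b1) - E) * z0 = 0 := by
      rw [hz1, hz3] at r3; linarith
    rcases mul_eq_zero.mp this with h' | h'
    · linarith
    · exact absurd h' hz0
  have hsum : 1 + r * (1 / b1) = 1 / b2 + r := by
    have : (1 + r * (1 / b1) - 1 / b2 - r) * z0 = 0 := by
      rw [hz1, hz2, hz3] at hs; linarith
    rcases mul_eq_zero.mp this with h' | h'
    · linarith
    · exact absurd h' hz0
  have hr0 : 0 < r := by
    have h1 : 1 / b2 ≤ b0 := by rw [div_le_iff₀ p2]; exact h02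
    have h2 : 0 ≤ E * r := by linarith
    have h3 : 0 ≤ r := nonneg_of_mul_nonneg_right h2 (by linarith)
    rcases h3.lt_or_eq with h4 | h4
    · exact h4
    · rw [← h4] at hb3; linarith
  refine ⟨r, 1 / b1, 1 / b2, hr0, by positivity, by positivity, by field_simp, by field_simp, hb0,
    hb3, hsum, hz0, hz1, hz2, hz3⟩

/-- Possible distance vectors of an outside vertex. -/
lemma alg_types (f0 f1 f2 f3 : ℤ) (r h1 h2 : ℝ) (hr : 0 < r) (p1 : 0 < h1) (p2 : 0 < h2)
    (hs : 1 + r * h1 = h2 + r)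
    (a1 : |f0 - f1| ≤ 1) (a2 : |f1 - f2| ≤ 1) (a3 : |f3 - f2| ≤ 1)
    (h : (f0 : ℝ) + r * h1 * f1 = h2 * f2 + r * f3) :
    (f0 = f1 ∧ f2 = f1 ∧ f3 = f1) ∨ (f0 + 1 = f1 ∧ f2 = f1 ∧ f3 + 1 = f1) ∨
    (f0 = f1 + 1 ∧ f2 = f1 ∧ f3 = f1 + 1) ∨
    (h1 = 1 ∧ h2 = 1 ∧ f0 + 1 = f1 ∧ f2 + 1 = f1 ∧ f3 = f1) ∨
    (h1 = 1 ∧ h2 = 1 ∧ f0 = f1 + 1 ∧ f2 = f1 + 1 ∧ f3 = f1) := by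
  have hp : 0 < r * h1 := by positivity
  obtain ⟨x, hx⟩ : ∃ x, x = f0 - f1 := ⟨_, rfl⟩
  obtain ⟨y, hy⟩ : ∃ y, y = f3 - f2 := ⟨_, rfl⟩
  obtain ⟨w, hw⟩ : ∃ w, w = f1 - f2 := ⟨_, rfl⟩
  rw [← hx] at a1; rw [← hw] at a2; rw [← hy] at a3
  have key : (w : ℝ) + x + r * h1 * w = r * y := by
    rw [hx, hy, hw]; push_cast
    have : h2 = 1 + r * h1 - r := by linarith
    rw [this] at h
    linarith
  have hone : r * h1 = r → h1 = 1 ∧ h2 = 1 := by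
    intro hh
    refine ⟨?_, by linarith⟩
    have : r * (h1 - 1) = 0 := by linarith
    rcases mul_eq_zero.mp this with h' | h' <;> linarith
  have hx' : x = -1 ∨ x = 0 ∨ x = 1 := by rw [abs_le] at a1; omega
  have hy' : y = -1 ∨ y = 0 ∨ y = 1 := by rw [abs_le] at a3; omega
  have hw' : w = -1 ∨ w = 0 ∨ w = 1 := by rw [abs_le] at a2; omega
  rcases hx' with hx' | hx' | hx' <;> rcases hy' with hy' | hy' | hy' <;>
    rcases hw' with hw' | hw' | hw' <;> rw [hx', hy', hw'] at key <;> norm_num at key <;>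
    first
    | (exfalso; linarith)
    | (exfalso; omega)
    | (exfalso; rcases key with h' | h' <;> linarith)
    | (left; omega)
    | (right; left; omega)
    | (right; right; left; omega)
    | (have := hone (by linarith); right; right; right; left; refine ⟨this.1, this.2, ?_⟩; omega)
    | (have := hone (by linarith); right; right; right; right; refine ⟨this.1, this.2, ?_⟩; omega)

/-- The dependence of three path vertices with an outside vertex. -/
lemma alg_star (h E b g0 g1 g2 q0 q1 q2 q3 : ℝ) (hE : 1 ≤ E) (hb : b * h = 1)
    (hz : ¬ (q0 = 0 ∧ q1 = 0 ∧ q2 = 0 ∧ q3 = 0))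
    (hs : q0 + q1 + q2 + q3 = 0)
    (r0 : (h + E) * q0 + q2 + g0 * q3 = 0) (r1 : b * q1 + g1 * q3 = 0)
    (r2 : q0 + b * q2 + g2 * q3 = 0) :
    (g0 - h * g2) * (1 - h) + E * h * (g1 + g2) = E := by
  have e1 : q1 = - h * g1 * q3 := by linear_combination h * r1 - q1 * hb
  have e2 : q2 = - h * (q0 + g2 * q3) := by linear_combination h * r2 - q2 * hb
  have e0 : E * q0 = (h * g2 - g0) * q3 := by rw [e2] at r0; linarith
  have hq3 : q3 ≠ 0 := by
    intro h0
    rw [h0, mul_zero] at e0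
    have : q0 = 0 := by
      rcases mul_eq_zero.mp e0 with h' | h'
      · linarith
      · exact h'
    apply hz
    refine ⟨this, by rw [e1, h0]; ring, by rw [e2, h0, this]; ring, h0⟩
  have : ((g0 - h * g2) * (1 - h) + E * h * (g1 + g2) - E) * q3 = 0 := by
    rw [e1, e2] at hs
    linear_combination (1 - h) * e0 - E * hs
  rcases mul_eq_zero.mp this with h' | h'
  · linarith
  · exact absurd h' hq3

/-- Final elimination: per-vertex consequence. `T` is the balance `f0 - f1 + f3 - f2`. -/
lemma alg_final_one (h b : ℝ) (hh : 0 < h) (hb : b * h = 1) (f0 f1 f2 f3 : ℤ) (e : ℤ)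
    (he : e = 2 ∨ e = 3) (k0 : 1 ≤ f0) (k1 : 1 ≤ f1) (htri : e ≤ f0 + f3)
    (hstar : ((f0 - 1 : ℝ) - h * (f2 - 1)) * (1 - h) + (e - 1) * h * ((f1 - 1) + (f2 - 1)) = e - 1)
    (ht : (f0 = f1 ∧ f2 = f1 ∧ f3 = f1) ∨ (f0 + 1 = f1 ∧ f2 = f1 ∧ f3 + 1 = f1) ∨
    (f0 = f1 + 1 ∧ f2 = f1 ∧ f3 = f1 + 1) ∨
    (h = 1 ∧ f0 + 1 = f1 ∧ f2 + 1 = f1 ∧ f3 = f1) ∨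
    (h = 1 ∧ f0 = f1 + 1 ∧ f2 = f1 + 1 ∧ f3 = f1)) :
    (h = 1 ∧ f0 - f1 + f3 - f2 ≥ 0) ∨ (e = 2 ∧ b = h + 1 ∧ f0 - f1 + f3 - f2 = -2) ∨
    (e = 3 ∧ b = h + 2 ∧ f0 - f1 + f3 - f2 = 0) ∨
    (e = 3 ∧ b = 2 * h + 5 ∧ f0 - f1 + f3 - f2 = -2) := by
  have hcan : ∀ t : ℝ, t * h = 1 → b = t := by
    intro t h1
    have : (b - t) * h = 0 := by linarith
    rcases mul_eq_zero.mp this with h' | h' <;> linarith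
  rcases ht with ⟨rfl, rfl, rfl⟩ | ⟨rfl, rfl, h3⟩ | ⟨rfl, rfl, rfl⟩ | ⟨hh1, t⟩ | ⟨hh1, t⟩
  · -- all equal
    by_cases h1 : f3 = 1
    · subst h1
      norm_num at hstar
      rcases he with rfl | rfl <;> norm_num at hstar
    · have h2 : (2 : ℝ) ≤ f3 := by exact_mod_cast (by omega : (2 : ℤ) ≤ f3)
      rcases he with rfl | rfl
      · norm_num at hstar
        exfalso
        nlinarith [mul_nonneg (sub_nonneg.mpr h2) (sq_nonneg h), pow_pos hh 2]
      · push_cast at hstar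
        right; right; left
        have h4 : ((f3 : ℝ) - 1) * (h + 1) ^ 2 = 2 := by linarith
        have h5 : f3 < 3 := by
          by_contra hc
          have : (3 : ℝ) ≤ f3 := by exact_mod_cast (by omega : (3 : ℤ) ≤ f3)
          nlinarith [mul_nonneg (sub_nonneg.mpr this) (sq_nonneg (h + 1)), pow_pos hh 2]
        have h6 : f3 = 2 := by omega
        subst h6
        push_cast at h4
        refine ⟨rfl, hcan _ (by linarith), by ring⟩
  · have h3 : f3 = f0 := by omega
    subst h3
    have k0' : (1 : ℝ) ≤ f3 := by exact_mod_cast k0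
    push_cast at hstar
    rcases he with rfl | rfl
    · push_cast at hstar
      have h4 : (f3 : ℝ) * h ^ 2 + h + f3 = 2 := by linarith
      by_cases h1 : f3 = 1
      · subst h1
        right; left
        push_cast at h4
        exact ⟨rfl, hcan _ (by linarith), by ring⟩
      · have h2 : (2 : ℝ) ≤ f3 := by exact_mod_cast (by omega : (2 : ℤ) ≤ f3)
        exfalso
        nlinarith [mul_nonneg (sub_nonneg.mpr k0') (sq_nonneg h), pow_pos hh 2]
    · push_cast at hstar
      have h4 : (f3 : ℝ) * h ^ 2 + (2 * f3 + 1) * h + f3 = 3 := by linarith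
      by_cases h1 : f3 = 2
      · subst h1
        right; right; right
        push_cast at h4
        exact ⟨rfl, hcan _ (by linarith), by ring⟩
      · have h2 : (3 : ℝ) ≤ f3 := by exact_mod_cast (by omega : (3 : ℤ) ≤ f3)
        exfalso
        nlinarith [mul_nonneg (sub_nonneg.mpr k0') (sq_nonneg h), pow_pos hh 2,
          mul_nonneg (sub_nonneg.mpr k0') hh.le]
  · exfalso
    push_cast at hstar
    have k1' : (1 : ℝ) ≤ f2 := by exact_mod_cast k1
    rcases he with rfl | rfl
    · push_cast at hstar
      have h4 : ((f2 : ℝ) - 1) * (h ^ 2 + 1) = h := by linarith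
      by_cases h1 : f2 = 1
      · subst h1
        push_cast at h4
        linarith
      · have h2 : (2 : ℝ) ≤ f2 := by exact_mod_cast (by omega : (2 : ℤ) ≤ f2)
        nlinarith [mul_nonneg (sub_nonneg.mpr h2) (sq_nonneg h), sq_nonneg (h - 1)]
    · push_cast at hstar
      have h4 : ((f2 : ℝ) - 1) * (h + 1) ^ 2 = h + 1 := by linarith
      by_cases h1 : f2 = 1
      · subst h1
        push_cast at h4
        linarith
      · have h2 : (2 : ℝ) ≤ f2 := by exact_mod_cast (by omega : (2 : ℤ) ≤ f2)
        nlinarith [mul_nonneg (sub_nonneg.mpr h2) (sq_nonneg (h + 1)), sq_nonneg h]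
  · left; refine ⟨hh1, by omega⟩
  · left; refine ⟨hh1, by omega⟩

set_option linter.unusedSimpArgs false

lemma core {n : ℕ} (hn : 6 ≤ n) (G : SimpleGraph (Fin n)) (hG : G.Connected)
    (β : Fin n → ℝ)
    (hβ : ∀ i j, β i - β j = ∑ u, ((G.dist j u : ℝ) - G.dist i u))
    (hpsd : ∀ i j, i ≠ j → ∀ s t : ℝ,
      0 ≤ β i * s ^ 2 + 2 * ((G.dist i j : ℝ) - 1) * s * t + β j * t ^ 2)
    (K : Fin n → Fin n → ℝ) (hK : ∀ i j, K i j = if i = j then β i else (G.dist i j : ℝ) - 1)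
    (hrel : ∀ a b c d : Fin n, a ≠ b → a ≠ c → a ≠ d → b ≠ c → b ≠ d → c ≠ d →
      ∃ z0 z1 z2 z3 : ℝ, ¬ (z0 = 0 ∧ z1 = 0 ∧ z2 = 0 ∧ z3 = 0) ∧ z0 + z1 + z2 + z3 = 0 ∧
        ∀ j, K j a * z0 + K j b * z1 + K j c * z2 + K j d * z3 = 0)
    (v0 v1 v2 v3 : Fin n) (h01 : G.Adj v0 v1) (h12 : G.Adj v1 v2) (h23 : G.Adj v2 v3)
    (h02 : ¬ G.Adj v0 v2) (h13 : ¬ G.Adj v1 v3) (h03 : ¬ G.Adj v0 v3)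
    (n02 : v0 ≠ v2) (n13 : v1 ≠ v3) (n03 : v0 ≠ v3) : False := by
  classical
  have n01 := h01.ne
  have n12 := h12.ne
  have n23 := h23.ne
  have d01 : G.dist v0 v1 = 1 := SimpleGraph.dist_eq_one_iff_adj.mpr h01
  have d12 : G.dist v1 v2 = 1 := SimpleGraph.dist_eq_one_iff_adj.mpr h12
  have d23 : G.dist v2 v3 = 1 := SimpleGraph.dist_eq_one_iff_adj.mpr h23
  have tri : ∀ a b c, G.dist a c ≤ G.dist a b + G.dist b c := fun a b c => hG.dist_triangle
  have pos : ∀ a b, a ≠ b → 1 ≤ G.dist a b := fun a b h => hG.pos_dist_of_ne h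
  have ne1 : ∀ a b, ¬ G.Adj a b → G.dist a b ≠ 1 := fun a b h h' =>
    h (SimpleGraph.dist_eq_one_iff_adj.mp h')
  have d02 : G.dist v0 v2 = 2 := by
    have := tri v0 v1 v2; have := pos v0 v2 n02; have := ne1 v0 v2 h02; omega
  have d13 : G.dist v1 v3 = 2 := by
    have := tri v1 v2 v3; have := pos v1 v3 n13; have := ne1 v1 v3 h13; omega
  have hcomm : ∀ a b, G.dist a b = G.dist b a := fun a b => G.dist_comm
  obtain ⟨e, hedef⟩ : ∃ e : ℤ, e = G.dist v0 v3 := ⟨_, rfl⟩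
  have he : e = 2 ∨ e = 3 := by
    have := tri v0 v1 v3; have := pos v0 v3 n03; have := ne1 v0 v3 h03; omega
  have heR : (G.dist v0 v3 : ℝ) = e := by rw [hedef]; simp
  have hE : (1 : ℝ) ≤ (e : ℝ) - 1 := by rcases he with rfl | rfl <;> norm_num
  have d10 : G.dist v1 v0 = 1 := by rw [hcomm]; exact d01
  have d21 : G.dist v2 v1 = 1 := by rw [hcomm]; exact d12
  have d32 : G.dist v3 v2 = 1 := by rw [hcomm]; exact d23
  have d20 : G.dist v2 v0 = 2 := by rw [hcomm]; exact d02
  have d31 : G.dist v3 v1 = 2 := by rw [hcomm]; exact d13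
  have d30 : (G.dist v3 v0 : ℝ) = e := by rw [hcomm]; exact heR
  have hKd : ∀ i, K i i = β i := fun i => by rw [hK]; simp
  have hKo : ∀ i j, i ≠ j → K i j = (G.dist i j : ℝ) - 1 := fun i j h => by rw [hK]; simp [h]
  -- positivity
  obtain ⟨p0, p2, p02⟩ := alg_psd (β v0) (β v2) (by
    intro s t
    have := hpsd v0 v2 n02 s t
    rw [d02] at this; push_cast at this; linarith)
  obtain ⟨p1, p3, p13⟩ := alg_psd (β v1) (β v3) (by
    intro s t
    have := hpsd v1 v3 n13 s t
    rw [d13] at this; push_cast at this; linarith)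
  -- the dependence
  obtain ⟨z0, z1, z2, z3, hz, hzs, hrow⟩ := hrel v0 v1 v2 v3 n01 n02 n03 n12 n13 n23
  have r0 := hrow v0
  have r1 := hrow v1
  have r2 := hrow v2
  have r3 := hrow v3
  rw [hKd, hKo _ _ n01, hKo _ _ n02, hKo _ _ n03, d01, d02, heR] at r0
  rw [hKd, hKo _ _ n01.symm, hKo _ _ n12, hKo _ _ n13, d10, d12, d13] at r1
  rw [hKd, hKo _ _ n02.symm, hKo _ _ n12.symm, hKo _ _ n23, d20, d21, d23] at r2
  rw [hKd, hKo _ _ n03.symm, hKo _ _ n13.symm, hKo _ _ n23.symm, d30, d31, d32] at r3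
  push_cast at r0 r1 r2 r3
  obtain ⟨r, h1, h2, hr, ph1, ph2, b1h, b2h, b0e, b3e, hsum, hz0, hz1, hz2, hz3⟩ :=
    alg_path (β v0) (β v1) (β v2) (β v3) (e - 1) z0 z1 z2 z3 hE p1 p2 p02 hz hzs
      (by linarith) (by linarith) (by linarith) (by linarith)
  -- the outside vertices
  set T : Finset (Fin n) := Finset.univ \ {v0, v1, v2, v3} with hT
  have hTm : ∀ u ∈ T, u ≠ v0 ∧ u ≠ v1 ∧ u ≠ v2 ∧ u ≠ v3 := by
    intro u hu
    simpa [hT] using hu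
  have hcard4 : ({v0, v1, v2, v3} : Finset (Fin n)).card = 4 := by
    rw [Finset.card_insert_of_notMem, Finset.card_insert_of_notMem, Finset.card_insert_of_notMem,
      Finset.card_singleton] <;> simp [*]
  have hTcard : 2 ≤ T.card := by
    rw [hT, Finset.card_sdiff_of_subset (Finset.subset_univ _), hcard4]
    simp; omega
  have hsplit : ∀ g : Fin n → ℝ, ∑ u, g u = g v0 + g v1 + g v2 + g v3 + ∑ u ∈ T, g u := by
    intro g
    rw [hT, ← Finset.sum_sdiff (Finset.subset_univ ({v0, v1, v2, v3} : Finset (Fin n)))]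
    rw [Finset.sum_insert, Finset.sum_insert, Finset.sum_insert, Finset.sum_singleton]
    · ring
    all_goals simp [*]
  let F : Fin n → Fin n → ℤ := fun v u => (G.dist v u : ℤ)
  have hFR : ∀ v u, (G.dist v u : ℝ) = (F v u : ℝ) := fun v u => by simp [F]
  have hadjF : ∀ a b u, G.Adj a b → |F a u - F b u| ≤ 1 := by
    intro a b u hab
    have e1 := SimpleGraph.dist_eq_one_iff_adj.mpr hab
    have e2 := tri a b u
    have e3 := tri b a u
    rw [hcomm b a] at e3
    rw [abs_le]; simp only [F]; omega
  have htypes : ∀ u ∈ T, _ := fun u hu => by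
    obtain ⟨m0, m1, m2, m3⟩ := hTm u hu
    have hu' := hrow u
    rw [hKo _ _ m0, hKo _ _ m1, hKo _ _ m2, hKo _ _ m3, hcomm u v0, hcomm u v1, hcomm u v2,
      hcomm u v3, hFR, hFR, hFR, hFR, hz1, hz2, hz3] at hu'
    have hu2 : ((F v0 u : ℝ) + r * h1 * F v1 u - h2 * F v2 u - r * F v3 u) * z0 = 0 := by
      linear_combination hu' + z0 * hsum
    have hu3 : (F v0 u : ℝ) + r * h1 * F v1 u = h2 * F v2 u + r * F v3 u := by
      rcases mul_eq_zero.mp hu2 with h' | h'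
      · linarith
      · exact absurd h' hz0
    exact alg_types (F v0 u) (F v1 u) (F v2 u) (F v3 u) r h1 h2 hr ph1 ph2 hsum
      (hadjF _ _ _ h01) (hadjF _ _ _ h12) (hadjF _ _ _ h23.symm) hu3
  -- balances
  have B10 : β v1 - β v0 = (e - 1) + ∑ u ∈ T, ((F v0 u : ℝ) - F v1 u) := by
    have hc : ∑ u ∈ T, ((G.dist v0 u : ℝ) - G.dist v1 u)
        = ∑ u ∈ T, ((F v0 u : ℝ) - F v1 u) := by simp only [F, Int.cast_natCast]
    rw [hβ, hsplit, hc]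
    simp only [SimpleGraph.dist_self, d01, d02, heR, d10, d12, d13, d20, d21, d23, d30, d31, d32]
    push_cast
    ring
  have B23 : β v2 - β v3 = (e - 1) + ∑ u ∈ T, ((F v3 u : ℝ) - F v2 u) := by
    have hc : ∑ u ∈ T, ((G.dist v3 u : ℝ) - G.dist v2 u)
        = ∑ u ∈ T, ((F v3 u : ℝ) - F v2 u) := by simp only [F, Int.cast_natCast]
    rw [hβ, hsplit, hc]
    simp only [SimpleGraph.dist_self, d01, d02, heR, d10, d12, d13, d20, d21, d23, d30, d31, d32]
    push_cast
    ring
  have B21 : β v2 - β v1 = ∑ u ∈ T, ((F v1 u : ℝ) - F v2 u) := by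
    have hc : ∑ u ∈ T, ((G.dist v1 u : ℝ) - G.dist v2 u)
        = ∑ u ∈ T, ((F v1 u : ℝ) - F v2 u) := by simp only [F, Int.cast_natCast]
    rw [hβ, hsplit, hc]
    simp only [SimpleGraph.dist_self, d01, d02, heR, d10, d12, d13, d20, d21, d23, d30, d31, d32]
    push_cast
    ring
  have hb12 : β v1 = β v2 := by
    by_cases hA : ∀ u ∈ T, F v1 u = F v2 u
    · have : ∑ u ∈ T, ((F v1 u : ℝ) - F v2 u) = 0 :=
        Finset.sum_eq_zero (fun u hu => by rw [hA u hu]; ring)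
      linarith
    · push Not at hA
      obtain ⟨u, hu, hne⟩ := hA
      have : h1 = 1 ∧ h2 = 1 := by
        rcases htypes u hu with t | t | t | t | t
        · omega
        · omega
        · omega
        · exact ⟨t.1, t.2.1⟩
        · exact ⟨t.1, t.2.1⟩
      rw [this.1] at b1h
      rw [this.2] at b2h
      linarith
  have hh : h2 = h1 := by
    have : β v1 * (h2 - h1) = 0 := by rw [← hb12] at b2h; linarith
    rcases mul_eq_zero.mp this with h' | h' <;> linarith
  subst hh
  have hS12 : ∑ u ∈ T, ((F v0 u : ℝ) - F v1 u) = ∑ u ∈ T, ((F v3 u : ℝ) - F v2 u) := by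
    have h3 : ∑ u ∈ T, (((F v0 u : ℝ) - F v1 u) + 2 * ((F v1 u : ℝ) - F v2 u))
        = ∑ u ∈ T, ((F v3 u : ℝ) - F v2 u) := by
      apply Finset.sum_congr rfl
      intro u hu
      have : (F v0 u - F v1 u) + 2 * (F v1 u - F v2 u) = F v3 u - F v2 u := by
        rcases htypes u hu with t | t | t | t | t <;> omega
      exact_mod_cast this
    rw [Finset.sum_add_distrib, ← Finset.mul_sum, ← B21] at h3
    linarith
  have hb03 : β v0 = β v3 := by linarith
  have hr1 : r = 1 := by
    rw [← hb03, b0e] at b3e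
    have : ((e : ℝ) - 1) * ((r - 1) * (r + 1)) = 0 := by linarith
    rcases mul_eq_zero.mp this with h' | h'
    · linarith
    · rcases mul_eq_zero.mp h' with h' | h' <;> linarith
  subst hr1
  have hbal : ∑ u ∈ T, ((F v0 u : ℝ) - F v1 u + F v3 u - F v2 u)
      = 2 * (β v1 - h2 - 2 * (e - 1)) := by
    have : ∑ u ∈ T, ((F v0 u : ℝ) - F v1 u + F v3 u - F v2 u)
      = ∑ u ∈ T, ((F v0 u : ℝ) - F v1 u) + ∑ u ∈ T, ((F v3 u : ℝ) - F v2 u) := by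
      rw [← Finset.sum_add_distrib]
      exact Finset.sum_congr rfl (fun u _ => by ring)
    rw [this]
    linarith
  have hone : ∀ u ∈ T, (h2 = 1 ∧ F v0 u - F v1 u + F v3 u - F v2 u ≥ 0) ∨
      (e = 2 ∧ β v1 = h2 + 1 ∧ F v0 u - F v1 u + F v3 u - F v2 u = -2) ∨
      (e = 3 ∧ β v1 = h2 + 2 ∧ F v0 u - F v1 u + F v3 u - F v2 u = 0) ∨
      (e = 3 ∧ β v1 = 2 * h2 + 5 ∧ F v0 u - F v1 u + F v3 u - F v2 u = -2) := fun u hu => by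
    obtain ⟨m0, m1, m2, m3⟩ := hTm u hu
    obtain ⟨q0, q1, q2, q3, hq, hqs, hqr⟩ := hrel v0 v1 v2 u n01 n02 m0.symm n12 m1.symm m2.symm
    have r0 := hqr v0
    have r1 := hqr v1
    have r2 := hqr v2
    rw [hKd, hKo _ _ n01, hKo _ _ n02, hKo _ _ m0.symm, d01, d02, hFR v0 u] at r0
    rw [hKd, hKo _ _ n01.symm, hKo _ _ n12, hKo _ _ m1.symm, d10, d12, hFR v1 u] at r1
    rw [hKd, hKo _ _ n02.symm, hKo _ _ n12.symm, hKo _ _ m2.symm, d20, d21, hFR v2 u] at r2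
    push_cast at r0 r1 r2
    have hst := alg_star h2 (e - 1) (β v1) (F v0 u - 1) (F v1 u - 1) (F v2 u - 1) q0 q1 q2 q3 hE
      b1h hq hqs (by rw [b0e] at r0; linarith) (by linarith) (by rw [hb12]; linarith)
    have htri : e ≤ F v0 u + F v3 u := by
      have := tri v0 u v3
      rw [hcomm u v3] at this
      simp only [F]; omega
    exact alg_final_one h2 (β v1) ph2 b1h (F v0 u) (F v1 u) (F v2 u) (F v3 u) e he
      (by have := pos v0 u m0.symm; simp only [F]; omega)
      (by have := pos v1 u m1.symm; simp only [F]; omega) htri hst (by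
        rcases htypes u hu with t | t | t | t | t
        · exact Or.inl t
        · exact Or.inr (Or.inl t)
        · exact Or.inr (Or.inr (Or.inl t))
        · exact Or.inr (Or.inr (Or.inr (Or.inl ⟨t.1, t.2.2⟩)))
        · exact Or.inr (Or.inr (Or.inr (Or.inr ⟨t.1, t.2.2⟩))))
  have hneg : ∑ u ∈ T, ((F v0 u : ℝ) - F v1 u + F v3 u - F v2 u) < 0 →
      ∃ u ∈ T, F v0 u - F v1 u + F v3 u - F v2 u < 0 := by
    intro h
    by_contra! hc
    have : 0 ≤ ∑ u ∈ T, ((F v0 u : ℝ) - F v1 u + F v3 u - F v2 u) :=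
      Finset.sum_nonneg (fun u hu => by exact_mod_cast hc u hu)
    linarith
  by_cases hh1 : h2 = 1
  · rw [hh1] at b1h hbal
    obtain ⟨u, hu, hlt⟩ := hneg (by rw [hbal]; linarith)
    rcases hone u hu with t | t | t | t
    · omega
    · have := t.2.1; rw [hh1] at this; linarith
    · omega
    · have := t.2.1; rw [hh1] at this; linarith
  · rcases he with rfl | rfl
    · have hall : ∀ u ∈ T, β v1 = h2 + 1 ∧ F v0 u - F v1 u + F v3 u - F v2 u = -2 := by
        intro u hu
        rcases hone u hu with t | t | t | t
        · exact absurd t.1 hh1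
        · exact t.2
        · exact absurd t.1 (by norm_num)
        · exact absurd t.1 (by norm_num)
      have hsumT : ∑ u ∈ T, ((F v0 u : ℝ) - F v1 u + F v3 u - F v2 u) = ∑ u ∈ T, (-2 : ℝ) :=
        Finset.sum_congr rfl (fun u hu => by exact_mod_cast (hall u hu).2)
      obtain ⟨u, hu⟩ : T.Nonempty := Finset.card_pos.mp (by omega)
      rw [hsumT, Finset.sum_const, nsmul_eq_mul, (hall u hu).1] at hbal
      push_cast at hbal
      have : (2 : ℝ) ≤ T.card := by exact_mod_cast hTcard
      linarith
    · have hall : ∀ u ∈ T, (β v1 = h2 + 2 ∧ F v0 u - F v1 u + F v3 u - F v2 u = 0) ∨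
          (β v1 = 2 * h2 + 5 ∧ F v0 u - F v1 u + F v3 u - F v2 u = -2) := by
        intro u hu
        rcases hone u hu with t | t | t | t
        · exact absurd t.1 hh1
        · exact absurd t.1 (by norm_num)
        · exact Or.inl t.2
        · exact Or.inr t.2
      obtain ⟨u, hu⟩ : T.Nonempty := Finset.card_pos.mp (by omega)
      push_cast at hbal
      rcases hall u hu with t | t
      · obtain ⟨w, hw, hlt⟩ := hneg (by rw [hbal, t.1]; linarith)
        rcases hall w hw with t' | t'
        · omega
        · linarith [t.1, t'.1]
      · have : ∑ u ∈ T, ((F v0 u : ℝ) - F v1 u + F v3 u - F v2 u) ≤ 0 := by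
          apply Finset.sum_nonpos
          intro w hw
          have : F v0 w - F v1 w + F v3 w - F v2 w ≤ 0 := by
            rcases hall w hw with t' | t' <;> omega
          exact_mod_cast this
        rw [hbal, t.1] at this
        linarith
/-- If `G` is a connected graph on `n ≥ 6` vertices whose largest distance
Laplacian eigenvalue has multiplicity `n - 3`, then the complement of `G` is disconnected;
equivalently, `G` is the join of two nonempty graphs. -/
theorem compl_disconnected_of_multiplicity_eq_sub_three
    (n : ℕ) (hn : 6 ≤ n) (G : SimpleGraph (Fin n)) (hG : G.Connected)
    (hmult : eigMult (distLaplacian G) (lambdaMax (distLaplacian G)) = n - 3) :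
    ¬ Gᶜ.Connected ∧
      ∃ A B : Set (Fin n), A.Nonempty ∧ B.Nonempty ∧ A ∩ B = ∅ ∧ A ∪ B = Set.univ ∧
        ∀ a ∈ A, ∀ b ∈ B, G.Adj a b := by
  set L := distLaplacian G with hL
  set l := lambdaMax L with hl
  have hsym : ∀ i j, L i j = L j i := distLaplacian_isSymm G
  have hrow : ∀ i, ∑ j, L i j = 0 := distLaplacian_row G
  have hge : (n : ℝ) ≤ l := lambdaMax_ge (by omega) G hG
  have hn' : (6 : ℝ) ≤ n := by exact_mod_cast hn
  have hl0 : l ≠ 0 := by linarith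
  have hLd : ∀ i, L i i = ∑ k, (G.dist i k : ℝ) := fun i => by simp [hL, distLaplacian]
  have hLo : ∀ i j, i ≠ j → L i j = -(G.dist i j : ℝ) := fun i j h => by
    simp [hL, distLaplacian, h]
  obtain ⟨A, B, hA, hB, hAB, hadj⟩ : ∃ A B : Finset (Fin n), A.Nonempty ∧ B.Nonempty ∧
      A ∪ B = Finset.univ ∧ ∀ a ∈ A, ∀ b ∈ B, G.Adj a b := by
    by_contra hno
    obtain ⟨v0, v1, v2, v3, h01, h12, h23, h02, h13, h03, n02, n13, n03⟩ :=
      exists_induced_P4 (by omega) G hG hno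
    refine core hn G hG (fun i => l - 1 - ∑ k, (G.dist i k : ℝ)) ?_ ?_
      (fun i j => (if i = j then l else 0) - L i j - 1) ?_ ?_ v0 v1 v2 v3 h01 h12 h23 h02 h13 h03
      n02 n13 n03
    · intro i j
      rw [Finset.sum_sub_distrib]
      ring
    · intro i j hij s t
      have h := quad_strong (by omega) L hsym hrow hge (Pi.single i s + Pi.single j t)
      have e1 : L *ᵥ (Pi.single i s + Pi.single j t) = fun k => L k i * s + L k j * t := by
        ext k
        simp [Matrix.mulVec_add, Matrix.mulVec_single, mul_comm]
      have e2 : ∑ k, (Pi.single i s + Pi.single j t : Fin n → ℝ) k = s + t := by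
        simp [Finset.sum_add_distrib]
      rw [e1, e2, add_dotProduct, single_dotProduct, single_dotProduct, add_dotProduct,
        single_dotProduct, single_dotProduct] at h
      simp only [Pi.add_apply, Pi.single_eq_same, Pi.single_eq_of_ne hij,
        Pi.single_eq_of_ne hij.symm] at h
      rw [hsym j i, hLo i j hij, hLd, hLd] at h
      beta_reduce
      change _ ≤ l * _ at h
      linarith
    · intro i j
      by_cases h : i = j
      · subst h; simp only [if_true]; rw [hLd]; ring
      · simp only [h, if_false]; rw [hLo i j h]; ring
    · intro a b c d hab hac had hbc hbd hcd
      obtain ⟨z, hz, hzr⟩ := exists_rel L l hn hmult ![a, b, c, d] (by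
        intro x y hxy
        fin_cases x <;> fin_cases y <;> simp_all)
      have hs : ∑ k, z k = 0 := by
        have h1 : ∑ i, ∑ k, L i (![a, b, c, d] k) * z k
            = ∑ i, l * ∑ k, (if ![a, b, c, d] k = i then z k else 0) :=
          Finset.sum_congr rfl (fun i _ => hzr i)
        have h2 : ∀ j, ∑ i, L i j = 0 := fun j => by
          rw [← hrow j]; exact Finset.sum_congr rfl (fun i _ => hsym i j)
        have h3 : ∑ i, ∑ k, L i (![a, b, c, d] k) * z k = 0 := by
          rw [Finset.sum_comm]
          exact Finset.sum_eq_zero (fun k _ => by rw [← Finset.sum_mul, h2, zero_mul])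
        have h4 : ∑ i, ∑ k, (if ![a, b, c, d] k = i then z k else 0) = ∑ k, z k := by
          rw [Finset.sum_comm]
          exact Finset.sum_congr rfl (fun k _ => by simp)
        rw [h3, ← Finset.mul_sum, h4] at h1
        rcases mul_eq_zero.mp h1.symm with h | h
        · exact absurd h hl0
        · exact h
      refine ⟨z 0, z 1, z 2, z 3, ?_, ?_, ?_⟩
      · rintro ⟨h0, h1, h2, h3⟩
        apply hz
        ext k
        fin_cases k <;> simp [h0, h1, h2, h3]
      · rw [Fin.sum_univ_four] at hs; exact hs
      · intro j
        have h := hzr j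
        rw [Fin.sum_univ_four] at h hs
        rw [Fin.sum_univ_four] at h
        have hdelta : ∀ (x : Fin n) (y : ℝ), l * (if x = j then y else 0)
            = (if j = x then l else 0) * y := by
          intro x y
          by_cases hx : x = j
          · simp [hx]
          · simp [hx, Ne.symm hx]
        have h' : L j a * z 0 + L j b * z 1 + L j c * z 2 + L j d * z 3
            = l * ((if a = j then z 0 else 0) + (if b = j then z 1 else 0)
              + (if c = j then z 2 else 0) + (if d = j then z 3 else 0)) := h
        simp only [mul_add, hdelta] at h'
        beta_reduce
        linear_combination -h' - hs
  have hdisj : ∀ x, x ∈ A → x ∉ B := fun x h1 h2 => (hadj x h1 x h2).ne rfl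
  have hcov : ∀ x, x ∈ A ∨ x ∈ B := fun x => by
    rw [← Finset.mem_union, hAB]; exact Finset.mem_univ x
  constructor
  · intro hc
    obtain ⟨a, ha⟩ := hA
    obtain ⟨b, hb⟩ := hB
    obtain ⟨p⟩ := hc.preconnected a b
    obtain ⟨d, hd, h1, h2⟩ := p.exists_boundary_dart (A : Set (Fin n)) (by simpa using ha)
      (by simpa using fun h => hdisj b h hb)
    have h1' : d.fst ∈ A := by simpa using h1
    have h2' : d.snd ∈ B := (hcov d.snd).resolve_left (by simpa using h2)
    have := d.adj
    rw [SimpleGraph.compl_adj] at this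
    exact this.2 (hadj _ h1' _ h2')
  · refine ⟨A, B, by simpa using hA, by simpa using hB, ?_, ?_, ?_⟩
    · ext x
      simp only [Set.mem_inter_iff, Finset.mem_coe, Set.mem_empty_iff_false, iff_false]
      exact fun h => hdisj x h.1 h.2
    · ext x
      simpa using hcov x
    · intro a ha b hb
      exact hadj a (by simpa using ha) b (by simpa using hb)
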